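/- Kullback–Leibler average equals the normalized weighted geometric mean: let (Ω, 𝒜, μ) be a σ-finite measure space, let I be a nonempty finite index set, let f_i (i ∈ I) be μ-a.e. strictly positive probability densities with respect to μ, and let ω_i > 0 be scalars with ∑_{i∈I} ω_i = 1. Assume c := ∫ ∏_{i∈I} f_i(x)^{ω_i} dμ(x) satisfies 0 < c < ∞, and define f̄(x) := (1/c) ∏_{i∈I} f_i(x)^{ω_i}. Then f̄ is a probability density with respect to μ, and for every μ-a.e. strictly positive probability density f for which each D_KL(f‖f_i) and D_KL(f‖f̄) is well defined, one has ∑_{i∈I} ω_i D_KL(f‖f_i) ≥ −log c, with equality if and only if f = f̄ μ-almost everywhere; in particular f̄ minimizes the weighted Kullback–Leibler cost f ↦ ∑_{i∈I} ω_i D_KL(f‖f_i). -/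

import Mathlib

open MeasureTheory

/-- the Kullback-Leibler average equals the normalized weighted
geometric mean `f̄ = (1/c) ∏ fᵢ^ωᵢ`: `f̄` is a probability density, the weighted
KL cost of any density `f` is at least `−log c`, with equality iff `f = f̄` a.e.;
in particular `f̄` minimizes the weighted KL cost. -/
theorem KL_average_eq_normalized_weighted_geometric_mean
    {Ω : Type*} [MeasurableSpace Ω] (μ : Measure Ω) [SigmaFinite μ]
    {I : Type*} [Fintype I] [Nonempty I]
    (f : I → Ω → ℝ)
    (hmeas : ∀ i, Measurable (f i))
    (hnn : ∀ i x, 0 ≤ f i x)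
    (hpos : ∀ i, ∀ᵐ x ∂μ, 0 < f i x)
    (hone : ∀ i, ∫ x, f i x ∂μ = 1)
    (ω : I → ℝ) (hω : ∀ i, 0 < ω i) (hωs : ∑ i, ω i = 1)
    (c : ℝ) (hc : c = ∫ x, ∏ i, f i x ^ ω i ∂μ)
    (hcpos : 0 < c)
    (hcfin : Integrable (fun x => ∏ i, f i x ^ ω i) μ)
    (fbar : Ω → ℝ) (hfbar : ∀ x, fbar x = (∏ i, f i x ^ ω i) / c) :
    (∫ x, fbar x ∂μ) = 1 ∧
    ∀ g : Ω → ℝ, Measurable g → (∀ x, 0 ≤ g x) → (∀ᵐ x ∂μ, 0 < g x) →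
      (∫ x, g x ∂μ) = 1 →
      (∀ i, Integrable (fun x => g x * Real.log (g x / f i x)) μ) →
      Integrable (fun x => g x * Real.log (g x / fbar x)) μ →
      (-Real.log c ≤ ∑ i, ω i * ∫ x, g x * Real.log (g x / f i x) ∂μ) ∧
      ((∑ i, ω i * ∫ x, g x * Real.log (g x / f i x) ∂μ) = -Real.log c ↔
        g =ᵐ[μ] fbar) := by
  have hfb : fbar = fun x => (∏ i, f i x ^ ω i) / c := funext hfbar
  have hfbint : Integrable fbar μ := by rw [hfb]; exact hcfin.div_const c
  have hfb1 : (∫ x, fbar x ∂μ) = 1 := by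
    rw [hfb, integral_div, ← hc, div_self hcpos.ne']
  refine ⟨hfb1, ?_⟩
  intro g hgm hgnn hgpos hg1 hgi hgb
  have hgint : Integrable g μ := by
    by_contra h
    rw [integral_undef h] at hg1
    exact zero_ne_one hg1
  have hposall : ∀ᵐ x ∂μ, ∀ i, 0 < f i x := ae_all_iff.2 hpos
  have hfbpos : ∀ᵐ x ∂μ, 0 < fbar x := by
    filter_upwards [hposall] with x hx
    rw [hfbar]
    exact div_pos (Finset.prod_pos fun i _ => Real.rpow_pos_of_pos (hx i) _) hcpos
  -- pointwise decomposition of the cost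
  have hpt : ∀ᵐ x ∂μ, ∑ i, ω i * (g x * Real.log (g x / f i x))
      = g x * Real.log (g x / fbar x) - g x * Real.log c := by
    filter_upwards [hposall, hgpos, hfbpos] with x hx hg hb
    have h1 : Real.log (fbar x) = ∑ i, ω i * Real.log (f i x) - Real.log c := by
      rw [hfbar, Real.log_div
        (Finset.prod_pos fun i _ => Real.rpow_pos_of_pos (hx i) _).ne' hcpos.ne',
        Real.log_prod (fun i _ => (Real.rpow_pos_of_pos (hx i) _).ne')]
      congr 1
      exact Finset.sum_congr rfl fun i _ => Real.log_rpow (hx i) _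
    have h2 : ∀ i, ω i * (g x * Real.log (g x / f i x))
        = ω i * (g x * Real.log (g x)) - g x * (ω i * Real.log (f i x)) := by
      intro i
      rw [Real.log_div hg.ne' (hx i).ne']
      ring
    rw [Finset.sum_congr rfl fun i _ => h2 i, Finset.sum_sub_distrib, ← Finset.sum_mul,
      ← Finset.mul_sum, hωs, Real.log_div hg.ne' hb.ne', h1]
    ring
  have hcost : ∑ i, ω i * ∫ x, g x * Real.log (g x / f i x) ∂μ
      = (∫ x, g x * Real.log (g x / fbar x) ∂μ) - Real.log c := by
    have e1 : ∑ i, ω i * ∫ x, g x * Real.log (g x / f i x) ∂μ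
        = ∫ x, ∑ i, ω i * (g x * Real.log (g x / f i x)) ∂μ := by
      rw [integral_finsetSum _ fun i _ => (hgi i).const_mul (ω i)]
      exact Finset.sum_congr rfl fun i _ => (integral_const_mul _ _).symm
    rw [e1, integral_congr_ae hpt, integral_sub hgb (hgint.mul_const _), integral_mul_const,
      hg1, one_mul]
  -- the nonnegative integrand
  have hhint : Integrable (fun x => g x * Real.log (g x / fbar x) - g x + fbar x) μ :=
    (hgb.sub hgint).add hfbint
  have hhval : ∫ x, (g x * Real.log (g x / fbar x) - g x + fbar x) ∂μ
      = ∫ x, g x * Real.log (g x / fbar x) ∂μ := by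
    have hd : Integrable (fun x => g x * Real.log (g x / fbar x) - g x) μ := hgb.sub hgint
    rw [integral_add hd hfbint, integral_sub hgb hgint, hg1, hfb1]
    ring
  have hkey : ∀ a b : ℝ, 0 < a → 0 < b → 0 ≤ a * Real.log (a / b) - a + b ∧
      (a * Real.log (a / b) - a + b = 0 → a = b) := by
    intro a b ha hb
    have hl : Real.log (a / b) = - Real.log (b / a) := by
      rw [← Real.log_inv, inv_div]
    have hm : a * (b / a) = b := by field_simp
    constructor
    · have := mul_le_mul_of_nonneg_left (Real.log_le_sub_one_of_pos (div_pos hb ha)) ha.le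
      rw [hl]
      nlinarith
    · intro h0
      by_contra hne
      have hne1 : b / a ≠ 1 := fun h => hne ((div_eq_one_iff_eq ha.ne').1 h).symm
      have := mul_lt_mul_of_pos_left (Real.log_lt_sub_one_of_pos (div_pos hb ha) hne1) ha
      rw [hl] at h0
      nlinarith
  have hhnn : 0 ≤ᵐ[μ] (fun x => g x * Real.log (g x / fbar x) - g x + fbar x) := by
    filter_upwards [hgpos, hfbpos] with x hg hb
    exact (hkey _ _ hg hb).1
  have hnonneg := integral_nonneg_of_ae hhnn
  rw [hhval] at hnonneg
  rw [hcost]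
  refine ⟨by linarith, ?_⟩
  have hiff := integral_eq_zero_iff_of_nonneg_ae hhnn hhint
  rw [hhval] at hiff
  constructor
  · intro h
    have h0 := hiff.1 (by linarith)
    filter_upwards [h0, hgpos, hfbpos] with x hx hg hb
    exact (hkey _ _ hg hb).2 hx
  · intro h
    have h0 : ∫ x, g x * Real.log (g x / fbar x) ∂μ = 0 := by
      refine hiff.2 ?_
      filter_upwards [h, hfbpos] with x hx hb
      simp [hx, div_self hb.ne']
    rw [h0, zero_sub]
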